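/- Equip P = k[x₁,x₂,x₃] with the Poisson bracket {x₁,x₂} = 0, {x₂,x₃} = 3x₁², {x₃,x₁} = 0. If G is a nontrivial finite subgroup of the graded Poisson automorphism group of P generated by Poisson reflections, then the invariant subalgebra P^G is not isomorphic to P as a Poisson algebra. -/

import Mathlib

open MvPolynomial

/-- The bracket on `k[x₁,x₂,x₃]` determined by the values `p12 = {x₁,x₂}`, `p23 = {x₂,x₃}`,
`p31 = {x₃,x₁}` via `{f,g} = Σ_{i<j} (∂f/∂xᵢ·∂g/∂xⱼ − ∂f/∂xⱼ·∂g/∂xᵢ)·{xᵢ,xⱼ}`. -/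
noncomputable def jacBracket {k : Type*} [Field k] (p12 p23 p31 : MvPolynomial (Fin 3) k)
    (f g : MvPolynomial (Fin 3) k) : MvPolynomial (Fin 3) k :=
  (pderiv 0 f * pderiv 1 g - pderiv 1 f * pderiv 0 g) * p12 +
    (pderiv 1 f * pderiv 2 g - pderiv 2 f * pderiv 1 g) * p23 +
    (pderiv 2 f * pderiv 0 g - pderiv 0 f * pderiv 2 g) * p31

/-- A graded Poisson automorphism: an algebra automorphism preserving the degree-one
component and the Poisson bracket. -/
def IsGradedPoissonAut {k : Type*} [Field k]
    (br : MvPolynomial (Fin 3) k → MvPolynomial (Fin 3) k → MvPolynomial (Fin 3) k)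
    (φ : MvPolynomial (Fin 3) k ≃ₐ[k] MvPolynomial (Fin 3) k) : Prop :=
  (∀ i, (φ (X i)).IsHomogeneous 1) ∧ ∀ f g, φ (br f g) = br (φ f) (φ g)

/-- A Poisson reflection: a graded Poisson automorphism of finite order whose restriction to
the degree-one part (as a matrix) has eigenvalues `1, 1, ξ` for some root of unity `ξ ≠ 1`. -/
def IsPoissonReflection {k : Type*} [Field k]
    (br : MvPolynomial (Fin 3) k → MvPolynomial (Fin 3) k → MvPolynomial (Fin 3) k)
    (φ : MvPolynomial (Fin 3) k ≃ₐ[k] MvPolynomial (Fin 3) k) : Prop :=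
  IsGradedPoissonAut br φ ∧ (∃ n, 0 < n ∧ φ ^ n = 1) ∧
    ∃ M : Matrix (Fin 3) (Fin 3) k, (∀ i, φ (X i) = ∑ j, C (M i j) * X j) ∧
      ∃ ξ : k, ξ ≠ 1 ∧ (∃ m, 0 < m ∧ ξ ^ m = 1) ∧
        M.charpoly = (Polynomial.X - 1) ^ 2 * (Polynomial.X - Polynomial.C ξ)

/-- `P^G ≅ P` as Poisson algebras: there is an injective algebra map `e : P → P` preserving
the bracket whose range is the invariant subalgebra `P^G`. -/
def InvariantsPoissonIso {k : Type*} [Field k]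
    (br : MvPolynomial (Fin 3) k → MvPolynomial (Fin 3) k → MvPolynomial (Fin 3) k)
    (G : Subgroup (MvPolynomial (Fin 3) k ≃ₐ[k] MvPolynomial (Fin 3) k)) : Prop :=
  ∃ e : MvPolynomial (Fin 3) k →ₐ[k] MvPolynomial (Fin 3) k,
    Function.Injective e ∧
    Set.range e = {f : MvPolynomial (Fin 3) k | ∀ φ ∈ G, φ f = f} ∧
    ∀ f g, e (br f g) = br (e f) (e g)

/-!
Let `e` be a Poisson isomorphism of `P` onto `P^G`, for the bracket with `{x₁,x₂} = {x₃,x₁} = 0` and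
`{x₂,x₃} = a x₁ᵐ`. Applying `e` to `{x₂,x₃}` gives `e(x₁)ᵐ = x₁ᵐ J` with
`J = ∂(e x₂, e x₃)/∂(x₂, x₃)`, so `e(x₁) = x₁ h` with `hᵐ = J`.

* `x₁ ∤ h`: since `P` is integral over `P^G`, the polynomial ring `P/(x₁)` is integral over the
  subalgebra generated by the classes of `e x₂` and `e x₃`. In characteristic zero their Jacobian
  determinant, the class of `J`, is then nonzero.
* `h` is constant: each `φ ∈ G` multiplies `x₁` by a unit, so a power of `x₁` is, up to a
  constant, an element of `P^G` dividing a power of the prime `e(x₁)` of `P^G`; hence it is a power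
  of `x₁ h`.

So the Jacobian determinant of `e` is a nonzero constant. The linear parts of the `e xᵢ` then span
`P₁`; they are `G`-invariant because `G` acts linearly, so `G` is trivial.
-/

section IntegralExtensions

theorem derivation_eq_zero_of_isIntegral {A B M : Type*} [CommRing A] [Algebra ℚ A] [CommRing B]
    [IsDomain B] [Algebra A B] [AddCommGroup M] [Module A M] [Module B M] [IsScalarTower A B M]
    [Module.IsTorsionFree B M] (D : Derivation A B M) {x : B} (hx : IsIntegral A x) :
    D x = 0 := by
  have : Nontrivial A := (algebraMap A B).domain_nontrivial
  have : IsAddTorsionFree A := .of_module_rat A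
  set p := minpoly A x
  have hp : p.Monic := minpoly.monic hx
  have hdeg : p.natDegree ≠ 0 := (minpoly.natDegree_pos hx).ne'
  have hprod : Polynomial.aeval x p.derivative • D x = 0 := by
    rw [← D.comp_aeval_eq, minpoly.aeval, map_zero]
  refine (smul_eq_zero.1 hprod).resolve_left fun hroot => ?_
  set c : A := algebraMap ℚ A (p.natDegree : ℚ)⁻¹
  have hmonic : (Polynomial.C c * p.derivative).Monic := by
    apply Polynomial.monic_C_mul_of_mul_leadingCoeff_eq_one
    have hdegQ : (p.natDegree : ℚ) ≠ 0 := Nat.cast_ne_zero.2 hdeg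
    rw [Polynomial.leadingCoeff_derivative, hp.leadingCoeff, one_mul,
      ← map_natCast (algebraMap ℚ A), ← map_mul, inv_mul_cancel₀ hdegQ, map_one]
  have hlt : (Polynomial.C c * p.derivative).degree < p.degree :=
    (Polynomial.C_mul' c p.derivative ▸ Polynomial.degree_smul_le c _).trans_lt
      (Polynomial.degree_derivative_lt hp.ne_zero)
  exact (minpoly.min A x hmonic (by rw [map_mul, hroot, mul_zero])).not_gt hlt

theorem derivation_eq_zero_of_isIntegralElem {R A B : Type*} [CommRing R] [CommRing A]
    [Algebra ℚ A] [CommRing B] [IsDomain B] [Algebra R A] [Algebra R B] (f : A →ₐ[R] B)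
    (D : Derivation R B B) (hD : ∀ a, D (f a) = 0) {x : B} (hx : f.toRingHom.IsIntegralElem x) :
    D x = 0 := by
  algebraize [f.toRingHom]
  have hDA (a : A) : D (algebraMap A B a) = 0 := hD a
  let D' : Derivation A B B := Derivation.mk'
    { toFun := D
      map_add' := D.map_add
      map_smul' := fun a b => by
        rw [Algebra.smul_def, D.leibniz, hDA, smul_zero, add_zero]
        simp only [RingHom.id_apply, algebraMap_smul] }
    D.leibniz
  exact derivation_eq_zero_of_isIntegral D' hx

theorem isIntegral_of_range_eq_invariants {A B G : Type*} [CommRing A] [CommRing B] [Group G]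
    [Finite G] [MulSemiringAction G B] {e : A →+* B}
    (he : ∀ b, b ∈ Set.range e ↔ ∀ g : G, g • b = b) : e.IsIntegral := by
  algebraize [e]
  have : Algebra.IsInvariant A B G := ⟨fun b hb => (he b).2 hb⟩
  exact (Algebra.IsInvariant.isIntegral A B G).isIntegral

theorem dvd_of_map_dvd_map_of_range_eq_invariants {A B G : Type*} [CommRing A] [CommRing B]
    [IsDomain B] [Group G] [MulSemiringAction G B] {e : A →+* B} (hinj : Function.Injective e)
    (he : ∀ b, b ∈ Set.range e ↔ ∀ g : G, g • b = b) {p q : A} (hpq : e p ∣ e q) : p ∣ q := by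
  obtain ⟨r, hr⟩ := hpq
  have hfix (a : A) (g : G) : g • e a = e a := (he (e a)).1 ⟨a, rfl⟩ g
  rcases eq_or_ne (e p) 0 with hp | hp
  · have hq : q = 0 := hinj (by rw [hr, hp, zero_mul, map_zero])
    exact hq ▸ dvd_zero p
  · have hr_inv (g : G) : g • r = r := by
      refine mul_left_cancel₀ hp ?_
      calc e p * g • r = g • (e p * r) := by rw [smul_mul', hfix]
        _ = e p * r := by rw [← hr, hfix]
    obtain ⟨s, rfl⟩ := (he r).2 hr_inv
    exact ⟨s, hinj (by rw [hr, map_mul])⟩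

-- The norm of `x` is associated to a power of `x`, and it divides a power of `e q` already
-- inside the ring of invariants, where `e q` is prime.
theorem isUnit_of_map_prime_eq_mul {A B G : Type*} [CommRing A] [CommRing B] [IsDomain B]
    [Group G] [Finite G] [MulSemiringAction G B] {e : A →+* B}
    (hinj : Function.Injective e) (he : ∀ b, b ∈ Set.range e ↔ ∀ g : G, g • b = b)
    {q : A} (hq : Prime q) {x h : B} (hx : Prime x) (hGx : ∀ g : G, Associated (g • x) x)
    (hqx : e q = x * h) (hxh : ¬ x ∣ h) : IsUnit h := by
  have := hinj.isDomain e
  have := Fintype.ofFinite G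
  set N := Fintype.card G
  obtain ⟨p, hp⟩ := (he _).2 (Finset.smul_prod_perm (G := G) x)
  have hnorm : Associated (e p) (x ^ N) := by
    simpa [hp] using Associated.prod Finset.univ _ (fun _ => x) fun g _ => hGx g
  have hpq : p ∣ q ^ N := by
    refine dvd_of_map_dvd_map_of_range_eq_invariants hinj he ?_
    rw [map_pow, hqx]
    exact hnorm.dvd.trans (pow_dvd_pow_of_dvd (dvd_mul_right x h) N)
  obtain ⟨s, -, hps⟩ := (dvd_prime_pow hq N).1 hpq
  have hxs : Associated (x ^ N) (x ^ s * h ^ s) := by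
    have heps : Associated (e p) (e (q ^ s)) := hps.map e
    rw [map_pow, hqx, mul_pow] at heps
    exact hnorm.symm.trans heps
  have hs : s ≠ 0 := by
    rintro rfl
    have hunit : IsUnit (x ^ N) := hxs.symm.isUnit (by simp)
    exact hx.not_isUnit ((isUnit_pow_iff Fintype.card_ne_zero).1 hunit)
  have hdvd : h ∣ x ^ N := ((dvd_pow_self h hs).mul_left _).trans hxs.symm.dvd
  obtain ⟨t, -, hht⟩ := (dvd_prime_pow hx N).1 hdvd
  have ht : t = 0 := by
    by_contra ht
    exact hxh ((dvd_pow_self x ht).trans hht.symm.dvd)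
  simpa [ht] using hht

end IntegralExtensions

section JacobianMatrices

variable {R σ τ υ : Type*} [CommRing R]

theorem derivation_algHom_apply {B M : Type*} [CommRing B] [Algebra R B] [AddCommGroup M]
    [Module R M] [Module B M] [Fintype σ] (D : Derivation R B M)
    (f : MvPolynomial σ R →ₐ[R] B) (p : MvPolynomial σ R) :
    D (f p) = ∑ i, f (pderiv i p) • D (f (X i)) := by
  classical
  induction p using MvPolynomial.induction_on with
  | C a => simp [← algebraMap_eq]
  | add p q hp hq => simp [hp, hq, add_smul, Finset.sum_add_distrib]
  | mul_X p j hp =>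
    simp [hp, pderiv_X, Pi.single_apply, add_smul, Finset.sum_add_distrib, Finset.smul_sum,
      mul_smul, apply_ite f, ite_smul]

/-- The Jacobian matrix of the polynomial map whose pullback on coordinate rings is `f`: its rows
are the gradients of the polynomials `f (X i)`. -/
noncomputable def jacobianMatrix (f : MvPolynomial σ R →ₐ[R] MvPolynomial τ R) :
    Matrix σ τ (MvPolynomial τ R) :=
  .of fun i j => pderiv j (f (X i))

theorem jacobianMatrix_comp [Fintype τ] (g : MvPolynomial τ R →ₐ[R] MvPolynomial υ R)
    (f : MvPolynomial σ R →ₐ[R] MvPolynomial τ R) :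
    jacobianMatrix (g.comp f) = (jacobianMatrix f).map g * jacobianMatrix g := by
  ext1 i j
  exact derivation_algHom_apply (pderiv j) g (f (X i))

-- A vector in the kernel of the Jacobian matrix is a derivation that kills the image of `f`,
-- hence everything integral over it.
theorem det_jacobianMatrix_ne_zero_of_isIntegral [Fintype σ] [DecidableEq σ] [IsDomain R]
    [Algebra ℚ R] {f : MvPolynomial σ R →ₐ[R] MvPolynomial σ R}
    (hf : f.toRingHom.IsIntegral) : (jacobianMatrix f).det ≠ 0 := by
  intro hdet
  obtain ⟨v, hv, hJv⟩ := Matrix.exists_mulVec_eq_zero_iff.2 hdet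
  have hDX (i : σ) : mkDerivation R v (f (X i)) = 0 := by
    have := derivation_algHom_apply (mkDerivation R v) (.id R _) (f (X i))
    simp only [AlgHom.id_apply, mkDerivation_X] at this
    exact this.trans (congrFun hJv i)
  have hDf (p : MvPolynomial σ R) : mkDerivation R v (f p) = 0 := by
    simp only [derivation_algHom_apply, hDX, smul_zero, Finset.sum_const_zero]
  refine hv (funext fun i => ?_)
  rw [← mkDerivation_X R v i, Pi.zero_apply]
  exact derivation_eq_zero_of_isIntegralElem f _ hDf (hf (X i))

/-- Restriction of polynomials to the hyperplane `X 0 = 0`. -/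
noncomputable def restrictHyperplane (R : Type*) [CommRing R] (n : ℕ) :
    MvPolynomial (Fin (n + 1)) R →ₐ[R] MvPolynomial (Fin n) R :=
  aeval (Fin.cons 0 X)

@[simp]
theorem restrictHyperplane_X_zero (n : ℕ) : restrictHyperplane R n (X 0) = 0 := by
  rw [restrictHyperplane, aeval_X, Fin.cons_zero]

@[simp]
theorem restrictHyperplane_X_succ {n : ℕ} (i : Fin n) :
    restrictHyperplane R n (X i.succ) = X i := by
  rw [restrictHyperplane, aeval_X, Fin.cons_succ]

theorem restrictHyperplane_surjective (n : ℕ) : Function.Surjective (restrictHyperplane R n) := by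
  have hsection : (restrictHyperplane R n).comp (rename Fin.succ) = .id R _ := by
    ext1 i
    simp
  exact fun p => ⟨rename Fin.succ p, DFunLike.congr_fun hsection p⟩

theorem restrictHyperplane_eq_zero_of_X_dvd {n : ℕ} {p : MvPolynomial (Fin (n + 1)) R}
    (hp : X 0 ∣ p) : restrictHyperplane R n p = 0 := by
  obtain ⟨q, rfl⟩ := hp
  rw [map_mul, restrictHyperplane_X_zero, zero_mul]

theorem jacobianMatrix_restrictHyperplane_comp {n : ℕ}
    (e : MvPolynomial σ R →ₐ[R] MvPolynomial (Fin (n + 1)) R) :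
    jacobianMatrix ((restrictHyperplane R n).comp e) =
      ((jacobianMatrix e).submatrix id Fin.succ).map (restrictHyperplane R n) := by
  ext1 i j
  rw [jacobianMatrix_comp, Matrix.mul_apply, Fin.sum_univ_succ]
  simp [jacobianMatrix, pderiv_X, Pi.single_apply]

-- The restriction of `e` to the hyperplane `X 0 = 0` is again integral, and its Jacobian
-- determinant is the restriction of the minor.
theorem not_X_dvd_det_jacobianMatrix_submatrix_succ [IsDomain R] [Algebra ℚ R] {n : ℕ}
    {e : MvPolynomial (Fin (n + 1)) R →ₐ[R] MvPolynomial (Fin (n + 1)) R}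
    (he : e.toRingHom.IsIntegral) (hX : X 0 ∣ e (X 0)) :
    ¬ X 0 ∣ ((jacobianMatrix e).submatrix Fin.succ Fin.succ).det := by
  intro hdvd
  set π := restrictHyperplane R n
  let f : MvPolynomial (Fin n) R →ₐ[R] MvPolynomial (Fin n) R :=
    aeval fun i => π (e (X i.succ))
  have hcomp : f.comp π = π.comp e := by
    ext1 i
    cases i using Fin.cases with
    | zero => simp [π, restrictHyperplane_eq_zero_of_X_dvd hX]
    | succ i => simp [π, f]
  have hf : f.toRingHom.IsIntegral := by
    refine RingHom.IsIntegral.tower_top π.toRingHom f.toRingHom ?_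
    rw [show f.toRingHom.comp π.toRingHom = π.toRingHom.comp e.toRingHom from
      congrArg AlgHom.toRingHom hcomp]
    exact he.trans _ _ (π.toRingHom.isIntegral_of_surjective (restrictHyperplane_surjective n))
  have hfJ : jacobianMatrix f = ((jacobianMatrix e).submatrix Fin.succ Fin.succ).map π := by
    ext1 i j
    calc jacobianMatrix f i j = jacobianMatrix (π.comp e) i.succ j := by simp [jacobianMatrix, f]
      _ = π (jacobianMatrix e i.succ j.succ) := by
        rw [jacobianMatrix_restrictHyperplane_comp, Matrix.map_apply, Matrix.submatrix_apply, id]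
  refine det_jacobianMatrix_ne_zero_of_isIntegral hf ?_
  rw [hfJ]
  exact (AlgHom.map_det π _).symm.trans (restrictHyperplane_eq_zero_of_X_dvd hdvd)

theorem eq_sum_C_constantCoeff_pderiv_mul_X [Fintype σ] {p : MvPolynomial σ R}
    (hp : p.IsHomogeneous 1) : p = ∑ i, C (constantCoeff (pderiv i p)) * X i := by
  have hconst (i : σ) : C (constantCoeff (pderiv i p)) = pderiv i p :=
    (totalDegree_eq_zero_iff_eq_C.1
      ((totalDegree_zero_iff_isHomogeneous σ).2 hp.pderiv)).symm
  simpa only [hconst, one_smul, mul_comm] using hp.sum_X_mul_pderiv.symm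

-- Linear parts: at the origin the Jacobian matrix `J` of `u` is invertible and `J * Dφ = J`.
theorem eq_id_of_comp_eq_self [Fintype σ] [DecidableEq σ]
    {φ u : MvPolynomial σ R →ₐ[R] MvPolynomial σ R} (hφ : ∀ i, (φ (X i)).IsHomogeneous 1)
    (hφu : φ.comp u = u) (hu : IsUnit (constantCoeff (jacobianMatrix u).det)) :
    φ = .id R _ := by
  have hφ0 (p) : constantCoeff (φ p) = constantCoeff p := by
    have : (constantCoeff : MvPolynomial σ R →+* R).comp φ.toRingHom = constantCoeff := by
      ext i
      · simp
      · simpa [constantCoeff_eq] using (hφ i).coeff_eq_zero (d := 0) (by simp)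
    exact DFunLike.congr_fun this p
  set J := (jacobianMatrix u).map constantCoeff
  set L := (jacobianMatrix φ).map constantCoeff
  have hJL : J * L = J := by
    calc J * L = ((jacobianMatrix u).map φ * jacobianMatrix φ).map constantCoeff := by
          rw [Matrix.map_mul, Matrix.map_map]
          simp [J, L, Function.comp_def, hφ0]
      _ = J := by rw [← jacobianMatrix_comp, hφu]
  have hJ : IsUnit J := by
    rwa [RingHom.map_det, ← Matrix.isUnit_iff_isUnit_det] at hu
  have hL : L = 1 := hJ.mul_left_cancel (hJL.trans (mul_one J).symm)
  ext1 i
  calc φ (X i) = ∑ j, C (L i j) * X j := eq_sum_C_constantCoeff_pderiv_mul_X (hφ i)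
    _ = X i := by simp [hL, Matrix.one_apply, apply_ite C, ite_mul]

theorem det_jacobianMatrix_of_apply_X_zero {n : ℕ}
    {e : MvPolynomial (Fin (n + 1)) R →ₐ[R] MvPolynomial (Fin (n + 1)) R} {a : R}
    (he : e (X 0) = C a * X 0) :
    (jacobianMatrix e).det = C a * ((jacobianMatrix e).submatrix Fin.succ Fin.succ).det := by
  have hrow (j : Fin (n + 1)) : jacobianMatrix e 0 j = if j = 0 then C a else 0 := by
    simp [jacobianMatrix, he, pderiv_X, Pi.single_apply, eq_comm]
  simp [Matrix.det_succ_row_zero, hrow, Fin.succAbove_zero]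

end JacobianMatrices

section PoissonAlgebra

variable {k : Type*} [Field k]

/-- The Poisson bracket with `{x₁,x₂} = {x₃,x₁} = 0` and `{x₂,x₃} = a x₁ᵐ`. -/
noncomputable abbrev powerBracket (a : k) (m : ℕ) :
    MvPolynomial (Fin 3) k → MvPolynomial (Fin 3) k → MvPolynomial (Fin 3) k :=
  jacBracket 0 (C a * X 0 ^ m) 0

theorem exists_eq_X_mul_of_map_powerBracket {a : k} (ha : a ≠ 0) {m : ℕ} (hm : m ≠ 0)
    {e : MvPolynomial (Fin 3) k →ₐ[k] MvPolynomial (Fin 3) k}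
    (he : ∀ f g, e (powerBracket a m f g) = powerBracket a m (e f) (e g)) :
    ∃ h, e (X 0) = X 0 * h ∧ h ^ m = ((jacobianMatrix e).submatrix Fin.succ Fin.succ).det := by
  set J := ((jacobianMatrix e).submatrix Fin.succ Fin.succ).det
  have hpow : e (X 0) ^ m = X 0 ^ m * J := by
    have hCa : (C a : MvPolynomial (Fin 3) k) ≠ 0 := C_ne_zero.2 ha
    refine mul_left_cancel₀ hCa ?_
    calc C a * e (X 0) ^ m = e (powerBracket a m (X 1) (X 2)) := by
          simp [jacBracket, pderiv_X]
      _ = powerBracket a m (e (X 1)) (e (X 2)) := he _ _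
      _ = C a * (X 0 ^ m * J) := by
        simp only [J, jacBracket, jacobianMatrix, Matrix.det_fin_two, Matrix.submatrix_apply,
          Matrix.of_apply, Fin.succ_zero_eq_one, Fin.succ_one_eq_two, mul_zero, zero_add, add_zero]
        ring
  obtain ⟨h, hh⟩ : X 0 ∣ e (X 0) :=
    X_prime.dvd_of_dvd_pow ((dvd_pow_self (X 0) hm).trans ⟨J, hpow⟩)
  refine ⟨h, hh, mul_left_cancel₀ (pow_ne_zero m (X_ne_zero 0)) ?_⟩
  rw [← mul_pow, ← hh, hpow]

theorem associated_map_X_zero_of_map_powerBracket {a : k} (ha : a ≠ 0) {m : ℕ} (hm : m ≠ 0)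
    {φ : MvPolynomial (Fin 3) k ≃ₐ[k] MvPolynomial (Fin 3) k}
    (hφ : ∀ f g, φ (powerBracket a m f g) = powerBracket a m (φ f) (φ g)) :
    Associated (φ (X 0)) (X 0) := by
  have hφsymm (f g) : φ.symm (powerBracket a m f g) = powerBracket a m (φ.symm f) (φ.symm g) := by
    rw [AlgEquiv.symm_apply_eq, hφ, φ.apply_symm_apply, φ.apply_symm_apply]
  obtain ⟨p, hp, -⟩ := exists_eq_X_mul_of_map_powerBracket ha hm (e := φ.toAlgHom) hφ
  obtain ⟨q, hq, -⟩ := exists_eq_X_mul_of_map_powerBracket ha hm (e := φ.symm.toAlgHom) hφsymm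
  refine associated_of_dvd_dvd ⟨φ q, ?_⟩ ⟨p, hp⟩
  rw [← map_mul, ← AlgEquiv.symm_apply_eq]
  exact hq

theorem stmt_11_general [CharZero k] {a : k} (ha : a ≠ 0) {m : ℕ} (hm : m ≠ 0)
    (G : Subgroup (MvPolynomial (Fin 3) k ≃ₐ[k] MvPolynomial (Fin 3) k)) [Finite G]
    (hG : ∀ φ ∈ G, IsGradedPoissonAut (powerBracket a m) φ) (hnt : G ≠ ⊥) :
    ¬ InvariantsPoissonIso (powerBracket a m) G := by
  rintro ⟨e, hinj, hrange, hbr⟩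
  have hinv (f) : f ∈ Set.range e ↔ ∀ φ : G, φ • f = f := by
    rw [hrange, Set.mem_ofPred_eq, Subtype.forall]
    rfl
  obtain ⟨h, heX, hJ⟩ := exists_eq_X_mul_of_map_powerBracket ha hm hbr
  have hXh : ¬ X 0 ∣ h := fun hdvd =>
    not_X_dvd_det_jacobianMatrix_submatrix_succ
      (isIntegral_of_range_eq_invariants (e := e.toRingHom) hinv) ⟨h, heX⟩
      (hJ ▸ dvd_pow hdvd hm)
  have hunit : IsUnit h :=
    isUnit_of_map_prime_eq_mul (e := e.toRingHom) hinj hinv (X_prime (i := 0)) X_prime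
      (fun φ => associated_map_X_zero_of_map_powerBracket ha hm (hG φ φ.2).2) heX hXh
  obtain ⟨c, hc, rfl⟩ := isUnit_iff_eq_C_of_isReduced.1 hunit
  have hdet : (jacobianMatrix e).det = C (c * c ^ m) := by
    rw [det_jacobianMatrix_of_apply_X_zero (heX.trans (mul_comm _ _)), ← hJ, C_mul, C_pow]
  refine hnt ((Subgroup.eq_bot_iff_forall G).2 fun φ hφ => ?_)
  have hφe : φ.toAlgHom.comp e = e := AlgHom.ext fun f => (hinv (e f)).1 ⟨f, rfl⟩ ⟨φ, hφ⟩
  have hφid := eq_id_of_comp_eq_self (hG φ hφ).1 hφe (by simpa [hdet] using hc.mul (hc.pow m))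
  exact AlgEquiv.ext fun f => DFunLike.congr_fun hφid f

end PoissonAlgebra

/-- With this bracket, if `G` is a nontrivial finite subgroup of graded Poisson
automorphisms generated by Poisson reflections, then `P^G` is not isomorphic to `P`
as a Poisson algebra. -/
theorem stmt_11 {k : Type*} [Field k] [IsAlgClosed k] [CharZero k]
    (G : Subgroup (MvPolynomial (Fin 3) k ≃ₐ[k] MvPolynomial (Fin 3) k))
    (hG : ∀ φ ∈ G, IsGradedPoissonAut (jacBracket 0 (3 * X 0 ^ 2) 0) φ)
    (hfin : Finite G) (hnt : G ≠ ⊥)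
    (hgen : ∃ S : Set (MvPolynomial (Fin 3) k ≃ₐ[k] MvPolynomial (Fin 3) k),
      (∀ φ ∈ S, IsPoissonReflection (jacBracket 0 (3 * X 0 ^ 2) 0) φ) ∧ Subgroup.closure S = G) :
    ¬ InvariantsPoissonIso (jacBracket 0 (3 * X 0 ^ 2) 0) G := by
  have hthree : (3 : MvPolynomial (Fin 3) k) = C 3 := (map_ofNat C 3).symm
  rw [hthree] at hG ⊢
  exact stmt_11_general three_ne_zero two_ne_zero G hG hnt
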